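/- arXiv:1607.01206 — 2 statements merged into one kernel-verified Lean document; each statement's English description precedes it below -/
import Mathlib

section
/- Let 𝔑 be an admissible weight matrix and let n_0 ∈ ℕ. For every N ∈ 𝔑 there exist Ṅ ∈ 𝔑 and a constant A ≥ 1 (depending on n_0 and N) such that the descendants S of N and Ṡ of Ṅ satisfy h_s(t) ≤ h_{ṡ}(At)^{n_0} for all t > 0, where s_k := S_k/k!, ṡ_k := Ṡ_k/k!, and h_s(t) := inf_{k∈ℕ} s_k t^k. -/
/-!
The descendant satisfies `s_k = ∏_{1 ≤ j ≤ k} τ_1 / τ_j`, and `τ` is decreasing because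
`τ_{k+1} - τ_k = (k + 1) (1/ν_{k+1} - 1/ν_k)`. If `ν_{2k} ≤ C ν'_k` for all `k`, then
`τ'_k ≤ C τ_{2k}`, since `∑_{i ≥ k} 1/ν_{2i}` is part of the sum `∑_{i ≥ 2k} 1/ν_i`.
Pairing the factors with indices `2j - 1` and `2j` in `s_{2k}` therefore gives
`s_{2k} ≤ (A^k s'_k)²`, hence `h_s(t) ≤ h_{s'}(At)²`. Condition (5) of admissibility allows
this step to be iterated `m` times, giving the exponent `2^m`; as `0 ≤ h ≤ 1`, any
`n₀ ≤ 2^m` is covered.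
-/

/-- The tail sum `∑_{j ≥ k} 1/ν_j`. -/
noncomputable def tailSum (ν : ℕ → ℝ) (k : ℕ) : ℝ := ∑' i : ℕ, 1 / ν (i + k)

/-- `τ_k = k/ν_k + ∑_{j ≥ k} 1/ν_j` (for `k ≥ 1`). -/
noncomputable def tauSeq (ν : ℕ → ℝ) (k : ℕ) : ℝ := (k : ℝ) / ν k + tailSum ν k

/-- The descendant `σ` of `ν`: `σ_0 = 1`, `σ_k = τ_1 k / τ_k` for `k ≥ 1`. -/
noncomputable def sigmaSeq (ν : ℕ → ℝ) : ℕ → ℝ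
  | 0 => 1
  | (k + 1) => tauSeq ν 1 * ((k : ℝ) + 1) / tauSeq ν (k + 1)

/-- `N_k = ν_0 ν_1 ⋯ ν_k`. -/
noncomputable def prodSeq (ν : ℕ → ℝ) (k : ℕ) : ℝ := ∏ i ∈ Finset.range (k + 1), ν i

/-- `h_s(t) = inf_k s_k t^k`. -/
noncomputable def hFun (s : ℕ → ℝ) (t : ℝ) : ℝ := ⨅ k : ℕ, s k * t ^ k

/-- `s_k = S_k / k!`, where `S` is the descendant of `ν`. -/
noncomputable def smallS (ν : ℕ → ℝ) (k : ℕ) : ℝ :=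
  prodSeq (sigmaSeq ν) k / (Nat.factorial k : ℝ)

/-- `ν` is the quotient sequence of a weight sequence: increasing, positive, `ν_0 = 1`,
and `N_k^{1/k} → ∞` for `N_k = ν_0 ⋯ ν_k`. -/
def IsWeightSeqQ (ν : ℕ → ℝ) : Prop :=
  ν 0 = 1 ∧ Monotone ν ∧ (∀ k, 0 < ν k) ∧
    Filter.Tendsto (fun k : ℕ => (prodSeq ν k) ^ (1 / (k : ℝ))) Filter.atTop Filter.atTop

/-- An admissible weight matrix, given as the set of quotient sequences `ν` of its weight
sequences `N` (Definition 4.6). -/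
def IsAdmissible (𝔑 : Set (ℕ → ℝ)) : Prop :=
  (∀ ν ∈ 𝔑, IsWeightSeqQ ν) ∧
  -- totally ordered under the pointwise order of the weight sequences
  (∀ ν ∈ 𝔑, ∀ ν' ∈ 𝔑,
    (∀ k, prodSeq ν k ≤ prodSeq ν' k) ∨ (∀ k, prodSeq ν' k ≤ prodSeq ν k)) ∧
  -- (1) for all N, Ṅ ∈ 𝔑: ν ≲ ν̇ or ν̇ ≲ ν
  (∀ ν ∈ 𝔑, ∀ ν' ∈ 𝔑,
    (∃ C > 0, ∀ k, ν k ≤ C * ν' k) ∨ (∃ C > 0, ∀ k, ν' k ≤ C * ν k)) ∧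
  -- (2) non-quasianalyticity
  (∀ ν ∈ 𝔑, Summable fun k => 1 / ν k) ∧
  -- (3) condition (4.3)
  (∀ ν ∈ 𝔑, ∃ C > 0, ∀ k : ℕ,
    ν (k + 1) / ν k ≤ (C + 1) + C * (ν (k + 1) / ((k : ℝ) + 1)) * tailSum ν (k + 1)) ∧
  -- (4) ν_k ≲ Ṅ_k^{1/k}
  (∀ ν ∈ 𝔑, ∃ ν' ∈ 𝔑, ∃ C > 0, ∀ k : ℕ, 1 ≤ k → ν k ≤ C * (prodSeq ν' k) ^ (1 / (k : ℝ))) ∧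
  -- (5) ν_{2k} ≲ ν̇_k
  (∀ ν ∈ 𝔑, ∃ ν' ∈ 𝔑, ∃ C > 0, ∀ k : ℕ, ν (2 * k) ≤ C * ν' k)

section Descendant

variable {ν ν' : ℕ → ℝ}

lemma tailSum_nonneg (hpos : ∀ k, 0 < ν k) (k : ℕ) : 0 ≤ tailSum ν k :=
  tsum_nonneg fun i => (one_div_pos.2 (hpos (i + k))).le

lemma summable_shift (hsum : Summable fun k => 1 / ν k) (k : ℕ) :
    Summable fun i : ℕ => 1 / ν (i + k) :=
  (summable_nat_add_iff (f := fun k => 1 / ν k) k).2 hsum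

lemma tailSum_succ (hsum : Summable fun k => 1 / ν k) (k : ℕ) :
    tailSum ν k = 1 / ν k + tailSum ν (k + 1) := by
  unfold tailSum
  rw [(summable_shift hsum k).tsum_eq_zero_add]
  simp only [zero_add]
  congr 2
  funext i
  congr 2
  ring

lemma tauSeq_pos (hpos : ∀ k, 0 < ν k) (k : ℕ) : 0 < tauSeq ν (k + 1) := by
  have h1 := tailSum_nonneg hpos (k + 1)
  have h2 : 0 < ((k + 1 : ℕ) : ℝ) / ν (k + 1) := div_pos (by positivity) (hpos _)
  unfold tauSeq
  linarith

lemma tauSeq_succ_le (hpos : ∀ k, 0 < ν k) (hmono : Monotone ν)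
    (hsum : Summable fun k => 1 / ν k) (k : ℕ) : tauSeq ν (k + 1) ≤ tauSeq ν k := by
  unfold tauSeq
  rw [tailSum_succ hsum k]
  have h : ((k : ℝ) + 1) * (1 / ν (k + 1)) ≤ ((k : ℝ) + 1) * (1 / ν k) :=
    mul_le_mul_of_nonneg_left (one_div_le_one_div_of_le (hpos k) (hmono (Nat.le_succ k)))
      (by positivity)
  push_cast
  have e1 : ((k : ℝ) + 1) / ν (k + 1) = ((k : ℝ) + 1) * (1 / ν (k + 1)) := by ring
  have e2 : (k : ℝ) / ν k + 1 / ν k = ((k : ℝ) + 1) * (1 / ν k) := by ring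
  linarith

/-- The doubling condition `ν_{2k} ≲ ν'_k` is inherited by the `τ`-sequences. -/
lemma tauSeq_le_double (hpos : ∀ k, 0 < ν k) (hsum : Summable fun k => 1 / ν k)
    (hpos' : ∀ k, 0 < ν' k) (hsum' : Summable fun k => 1 / ν' k) {C : ℝ} (hC : 0 < C)
    (h : ∀ k, ν (2 * k) ≤ C * ν' k) (k : ℕ) : tauSeq ν' k ≤ C * tauSeq ν (2 * k) := by
  have hinv : ∀ i, 1 / ν' i ≤ C * (1 / ν (2 * i)) := fun i => by
    rw [mul_one_div, div_le_div_iff₀ (hpos' i) (hpos _)]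
    linarith [h i]
  have htail : tailSum ν' k ≤ C * tailSum ν (2 * k) := by
    unfold tailSum
    rw [← tsum_mul_left]
    refine (summable_shift hsum' k).tsum_le_tsum_of_inj (fun i => 2 * i) ?_ ?_ ?_
      ((summable_shift hsum (2 * k)).mul_left C)
    · intro a b hab
      simpa using hab
    · intro c _
      exact mul_nonneg hC.le (one_div_pos.2 (hpos _)).le
    · intro i
      have := hinv (i + k)
      rwa [mul_add] at this
  have hk : (0 : ℝ) ≤ k := Nat.cast_nonneg k
  have hhead : (k : ℝ) / ν' k ≤ C * (((2 * k : ℕ) : ℝ) / ν (2 * k)) := by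
    have h1 : (k : ℝ) * (1 / ν' k) ≤ k * (C * (1 / ν (2 * k))) :=
      mul_le_mul_of_nonneg_left (hinv k) hk
    have h2 : 0 ≤ k * (C * (1 / ν (2 * k))) :=
      mul_nonneg hk (mul_nonneg hC.le (one_div_pos.2 (hpos _)).le)
    have e1 : (k : ℝ) / ν' k = k * (1 / ν' k) := by ring
    have e2 : C * (((2 * k : ℕ) : ℝ) / ν (2 * k)) = 2 * (k * (C * (1 / ν (2 * k)))) := by
      push_cast
      ring
    linarith
  unfold tauSeq
  rw [mul_add]
  exact add_le_add hhead htail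

lemma smallS_zero : smallS ν 0 = 1 := by
  simp [smallS, prodSeq, sigmaSeq]

lemma smallS_succ (k : ℕ) :
    smallS ν (k + 1) = smallS ν k * (tauSeq ν 1 / tauSeq ν (k + 1)) := by
  have hk : ((k : ℝ) + 1) ≠ 0 := by positivity
  have hf : (Nat.factorial k : ℝ) ≠ 0 := by positivity
  unfold smallS prodSeq
  rw [Finset.prod_range_succ, Nat.factorial_succ]
  simp only [sigmaSeq]
  push_cast
  field_simp

lemma smallS_pos (hpos : ∀ k, 0 < ν k) (k : ℕ) : 0 < smallS ν k := by
  induction k with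
  | zero => rw [smallS_zero]; exact one_pos
  | succ k ih =>
    rw [smallS_succ]
    exact mul_pos ih (div_pos (tauSeq_pos hpos 0) (tauSeq_pos hpos k))

lemma hFun_le (hpos : ∀ k, 0 < ν k) {t : ℝ} (ht : 0 ≤ t) (k : ℕ) :
    hFun (smallS ν) t ≤ smallS ν k * t ^ k :=
  ciInf_le ⟨0, by
    rintro _ ⟨j, rfl⟩
    exact mul_nonneg (smallS_pos hpos j).le (pow_nonneg ht j)⟩ k

lemma hFun_nonneg (hpos : ∀ k, 0 < ν k) {t : ℝ} (ht : 0 ≤ t) : 0 ≤ hFun (smallS ν) t :=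
  le_ciInf fun j => mul_nonneg (smallS_pos hpos j).le (pow_nonneg ht j)

lemma hFun_le_one (hpos : ∀ k, 0 < ν k) {t : ℝ} (ht : 0 ≤ t) : hFun (smallS ν) t ≤ 1 := by
  simpa [smallS_zero] using hFun_le hpos ht 0

/-- Doubling the index of `s` costs a square: each of the two factors of `s_{2k+2} / s_{2k}`
is at most `A` times the factor `s'_{k+1} / s'_k`. -/
lemma exists_smallS_double (hpos : ∀ k, 0 < ν k) (hmono : Monotone ν)
    (hsum : Summable fun k => 1 / ν k)
    (hpos' : ∀ k, 0 < ν' k) (hsum' : Summable fun k => 1 / ν' k) {C : ℝ} (hC : 0 < C)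
    (h : ∀ k, ν (2 * k) ≤ C * ν' k) :
    ∃ A : ℝ, 1 ≤ A ∧ ∀ k, smallS ν (2 * k) ≤ (A ^ k * smallS ν' k) ^ 2 := by
  have hτ : 0 < tauSeq ν 1 := tauSeq_pos hpos 0
  have hτ' : 0 < tauSeq ν' 1 := tauSeq_pos hpos' 0
  refine ⟨max 1 (C * tauSeq ν 1 / tauSeq ν' 1), le_max_left _ _, ?_⟩
  set A := max 1 (C * tauSeq ν 1 / tauSeq ν' 1) with hA
  intro k
  induction k with
  | zero => simp [smallS_zero]
  | succ k ih =>
    have p1 : 0 < tauSeq ν (2 * k + 1) := tauSeq_pos hpos _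
    have p2 : 0 < tauSeq ν (2 * k + 1 + 1) := tauSeq_pos hpos _
    have p' : 0 < tauSeq ν' (k + 1) := tauSeq_pos hpos' _
    have hle : tauSeq ν 1 / tauSeq ν (2 * k + 1) ≤ tauSeq ν 1 / tauSeq ν (2 * k + 1 + 1) :=
      div_le_div_of_nonneg_left hτ.le p2 (tauSeq_succ_le hpos hmono hsum _)
    have hfac : tauSeq ν 1 / tauSeq ν (2 * k + 1 + 1) ≤
        A * (tauSeq ν' 1 / tauSeq ν' (k + 1)) := by
      have hd : tauSeq ν' (k + 1) ≤ C * tauSeq ν (2 * k + 1 + 1) :=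
        tauSeq_le_double hpos hsum hpos' hsum' hC h (k + 1)
      calc tauSeq ν 1 / tauSeq ν (2 * k + 1 + 1)
          ≤ C * tauSeq ν 1 / tauSeq ν' (k + 1) := by
            rw [div_le_div_iff₀ p2 p']
            nlinarith
        _ = C * tauSeq ν 1 / tauSeq ν' 1 * (tauSeq ν' 1 / tauSeq ν' (k + 1)) := by
            field_simp
        _ ≤ A * (tauSeq ν' 1 / tauSeq ν' (k + 1)) :=
            mul_le_mul_of_nonneg_right (le_max_right _ _) (div_pos hτ' p').le
    have hq : 0 < tauSeq ν 1 / tauSeq ν (2 * k + 1) := div_pos hτ p1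
    have hq2 : 0 < tauSeq ν 1 / tauSeq ν (2 * k + 1 + 1) := div_pos hτ p2
    rw [show 2 * (k + 1) = 2 * k + 1 + 1 by ring, smallS_succ, smallS_succ, smallS_succ k]
    calc smallS ν (2 * k) * (tauSeq ν 1 / tauSeq ν (2 * k + 1)) *
          (tauSeq ν 1 / tauSeq ν (2 * k + 1 + 1))
        ≤ (A ^ k * smallS ν' k) ^ 2 * (A * (tauSeq ν' 1 / tauSeq ν' (k + 1))) *
          (A * (tauSeq ν' 1 / tauSeq ν' (k + 1))) := by
          have hq3 := hq2.trans_le hfac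
          exact mul_le_mul (mul_le_mul ih (hle.trans hfac) hq.le (sq_nonneg _)) hfac hq2.le
            (mul_nonneg (sq_nonneg _) hq3.le)
      _ = (A ^ (k + 1) * (smallS ν' k * (tauSeq ν' 1 / tauSeq ν' (k + 1)))) ^ 2 := by ring

lemma hFun_le_sq (hpos : ∀ k, 0 < ν k) (hpos' : ∀ k, 0 < ν' k) {A : ℝ} (hA : 1 ≤ A)
    (h : ∀ k, smallS ν (2 * k) ≤ (A ^ k * smallS ν' k) ^ 2) {t : ℝ} (ht : 0 < t) :
    hFun (smallS ν) t ≤ hFun (smallS ν') (A * t) ^ 2 := by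
  have hA0 : 0 ≤ A := zero_le_one.trans hA
  -- Taking square roots turns the claim into a lower bound for the infimum `h_{s'}(At)`.
  have key : √(hFun (smallS ν) t) ≤ hFun (smallS ν') (A * t) := by
    refine le_ciInf fun k => ?_
    refine Real.sqrt_le_iff.2 ⟨mul_nonneg (smallS_pos hpos' k).le (by positivity), ?_⟩
    calc hFun (smallS ν) t ≤ smallS ν (2 * k) * t ^ (2 * k) := hFun_le hpos ht.le _
      _ ≤ (A ^ k * smallS ν' k) ^ 2 * t ^ (2 * k) :=
          mul_le_mul_of_nonneg_right (h k) (by positivity)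
      _ = (smallS ν' k * (A * t) ^ k) ^ 2 := by ring
  calc hFun (smallS ν) t = √(hFun (smallS ν) t) ^ 2 :=
        (Real.sq_sqrt (hFun_nonneg hpos ht.le)).symm
    _ ≤ _ := pow_le_pow_left₀ (Real.sqrt_nonneg _) key 2

end Descendant

/-- Iterating the squaring step inside the matrix reaches every exponent `2 ^ m`. -/
lemma exists_hFun_le_two_pow {𝔑 : Set (ℕ → ℝ)} (hadm : IsAdmissible 𝔑) (m : ℕ) :
    ∀ ν ∈ 𝔑, ∃ ν' ∈ 𝔑, ∃ A : ℝ, 1 ≤ A ∧ ∀ t : ℝ, 0 < t →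
      hFun (smallS ν) t ≤ (hFun (smallS ν') (A * t)) ^ (2 ^ m) := by
  obtain ⟨hw, -, -, hsum, -, -, hdouble⟩ := hadm
  induction m with
  | zero =>
    intro ν hν
    exact ⟨ν, hν, 1, le_rfl, fun t _ => by simp⟩
  | succ m ih =>
    intro ν hν
    obtain ⟨μ, hμ, A, hA, h1⟩ := ih ν hν
    obtain ⟨ν', hν', C, hC, hd⟩ := hdouble μ hμ
    obtain ⟨-, hmono, hpos, -⟩ := hw μ hμ
    have hpos' := (hw ν' hν').2.2.1
    obtain ⟨B, hB, h2⟩ := exists_smallS_double hpos hmono (hsum μ hμ) hpos' (hsum ν' hν') hC hd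
    refine ⟨ν', hν', B * A, one_le_mul_of_one_le_of_one_le hB hA, fun t ht => ?_⟩
    have hAt : 0 < A * t := mul_pos (by linarith) ht
    calc hFun (smallS ν) t ≤ hFun (smallS μ) (A * t) ^ (2 ^ m) := h1 t ht
      _ ≤ (hFun (smallS ν') (B * (A * t)) ^ 2) ^ (2 ^ m) :=
          pow_le_pow_left₀ (hFun_nonneg hpos hAt.le) (hFun_le_sq hpos hpos' hB h2 hAt) _
      _ = hFun (smallS ν') (B * A * t) ^ (2 ^ (m + 1)) := by
          rw [← pow_mul, mul_assoc, pow_succ' 2 m]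

/-- Lemma 4.10: for an admissible weight matrix 𝔑 and `n₀ ∈ ℕ`, for every `N ∈ 𝔑` there is
`Ṅ ∈ 𝔑` such that the descendants satisfy `h_s(t) ≤ h_ṡ(At)^{n₀}`. -/
theorem stmt_10 (𝔑 : Set (ℕ → ℝ)) (hadm : IsAdmissible 𝔑) (n₀ : ℕ) :
    ∀ ν ∈ 𝔑, ∃ ν' ∈ 𝔑, ∃ A : ℝ, 1 ≤ A ∧ ∀ t : ℝ, 0 < t →
      hFun (smallS ν) t ≤ (hFun (smallS ν') (A * t)) ^ n₀ := by
  intro ν hν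
  obtain ⟨ν', hν', A, hA, h⟩ := exists_hFun_le_two_pow hadm n₀ ν hν
  have hpos' := (hadm.1 ν' hν').2.2.1
  refine ⟨ν', hν', A, hA, fun t ht => (h t ht).trans ?_⟩
  have hAt : 0 ≤ A * t := mul_nonneg (by linarith) ht.le
  exact pow_le_pow_of_le_one (hFun_nonneg hpos' hAt) (hFun_le_one hpos' hAt)
    (Nat.lt_two_pow_self).le
end

section
/- Let S and Ṡ be weight sequences such that σ_k^* := σ_k/k and σ̇_k^* := σ̇_k/k are increasing and σ_{2k} ≲ σ̇_k; set s_k := S_k/k! and ṡ_k := Ṡ_k/k!, and let Γ_{ṡ}(t) := min{k : inf_j ṡ_j t^j = ṡ_k t^k}. There is a constant D_1 = D_1(S,Ṡ) > 1 such that for every compact E ⊆ ℝ^n, every jet F = (F^α)_α on E satisfying |F^α(a)| ≤ C ρ^{|α|} S_{|α|} (α ∈ ℕ^n, a ∈ E) and |(R_a^p F)^α(b)| ≤ C ρ^{p+1} |α|! s_{p+1} |b−a|^{p+1−|α|} (p ∈ ℕ, |α| ≤ p, a, b ∈ E), every L ≥ D_1 ρ, every x ∈ ℝ^n with nearest point x̂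 ∈ E (i.e., |x−x̂| = d(x,E)), and every α ∈ ℕ^n: (a) |∂^α(T_{x̂}^{2Γ_{ṡ}(L d(x,E))} F)(x)| ≤ C (2L)^{|α|+1} S_{|α|}; and (b) if |α| < 2Γ_{ṡ}(L d(x,E)), then |∂^α(T_{x̂}^{2Γ_{ṡ}(L d(x,E))} F)(x) − F^α(x̂)| ≤ C (2L)^{|α|+1} |α|! s_{|α|+1} d(x,E). -/
/-!
Differentiating the Taylor polynomial term by term gives
`∂^α (T_a^p F) = T_a^{p-|α|} (F^{α+·})` for `|α| ≤ p`, and `0` otherwise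
(`pderivMulti_Tpoly`). Grouping the terms by degree and using the multinomial theorem, the part of
degree `j` of this polynomial, at distance `d` from `a`, is at most
`(n d)^j / j! * sup_{|β| = j} |F^{α+β}(a)|` (`abs_homPart_le`), hence at most
`C ρ^{|α|+j} (n d)^j S_{|α|+j} / j!`.

Put `p = 2 Γ` with `Γ = Γ_{s'}(L d)`. Minimality of `Γ` says `(σ'_Γ / Γ) L d ≤ 1`
(`GammaFun_ratio_le`). Since `σ_{2k} ≤ C₀ σ'_k` and `σ_k / k` increases, it follows that
`(σ_k / k) d ≤ κ := C₀ / (2 L)` for all `1 ≤ k ≤ p` (`ratio_le_of_GammaFun`), so that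
`s_{m+j} d^j ≤ s_m κ^j` as long as `m + j ≤ p` (`seq_geom`). With `(m+j)! ≤ 2^{m+j} m! j!` the
degree `j` parts are dominated by a geometric series of ratio `2 n ρ κ`, which is at most `1/2`
once `L ≥ D₁ ρ` with `D₁ = 2 + 2n + 2n C₀`. Starting this series at `j = 0` gives the first bound,
and starting it at `j = 1` (the part of degree `0` is `F^α(a)`) gives the second one.
-/

open Filter

/-- The finite set of multi-indices `α ∈ ℕ^n` with `|α| ≤ p`. -/
noncomputable def midx (n p : ℕ) : Finset (Fin n → ℕ) :=
  (Fintype.piFinset fun _ : Fin n => Finset.range (p + 1)).filter (fun α => ∑ i, α i ≤ p)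

/-- The Taylor polynomial `T_a^p F (x) = ∑_{|α| ≤ p} (x-a)^α F^α(a) / α!` of a jet `F`. -/
noncomputable def Tpoly {n : ℕ} (F : (Fin n → ℕ) → EuclideanSpace ℝ (Fin n) → ℝ)
    (a : EuclideanSpace ℝ (Fin n)) (p : ℕ) : EuclideanSpace ℝ (Fin n) → ℝ :=
  fun x => ∑ α ∈ midx n p, (∏ i, (x i - a i) ^ (α i) / (Nat.factorial (α i) : ℝ)) * F α a

/-- The Whitney remainder `(R_a^p F)^α(x) = F^α(x) − ∑_{|β| ≤ p-|α|} (x-a)^β F^{α+β}(a)/β!`. -/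
noncomputable def Rrem {n : ℕ} (F : (Fin n → ℕ) → EuclideanSpace ℝ (Fin n) → ℝ)
    (a : EuclideanSpace ℝ (Fin n)) (p : ℕ) (α : Fin n → ℕ)
    (x : EuclideanSpace ℝ (Fin n)) : ℝ :=
  F α x - ∑ β ∈ midx n (p - ∑ i, α i),
    (∏ i, (x i - a i) ^ (β i) / (Nat.factorial (β i) : ℝ)) * F (α + β) a

/-- The partial derivative `∂_i f` of a function on `ℝ^n`. -/
noncomputable def pderivE {n : ℕ} (i : Fin n) (f : EuclideanSpace ℝ (Fin n) → ℝ) :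
    EuclideanSpace ℝ (Fin n) → ℝ :=
  fun x => fderiv ℝ f x (EuclideanSpace.single i 1)

/-- The partial derivative `∂^β f` of a function on `ℝ^n` for a multi-index `β`. -/
noncomputable def pderivMulti {n : ℕ} (β : Fin n → ℕ) (f : EuclideanSpace ℝ (Fin n) → ℝ) :
    EuclideanSpace ℝ (Fin n) → ℝ :=
  (List.finRange n).foldr (fun i g => (pderivE i)^[β i] g) f

/-- The counting function `Γ_s(t) = min{k : h_s(t) = s_k t^k}`. -/
noncomputable def GammaFun (s : ℕ → ℝ) (t : ℝ) : ℕ :=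
  sInf {k : ℕ | s k * t ^ k = hFun s t}

/-! ### Derivatives of Taylor polynomials -/

/-- The `j`-th derivative of the divided power `t ↦ t^k / k!`. It is written out as a function
of two natural numbers, so that differentiation only raises `j`, also beyond the degree. -/
noncomputable def divPow (k j : ℕ) (t : ℝ) : ℝ :=
  if j ≤ k then t ^ (k - j) / (Nat.factorial (k - j) : ℝ) else 0

lemma hasDerivAt_divPow (k j : ℕ) (t : ℝ) :
    HasDerivAt (divPow k j) (divPow k (j + 1) t) t := by
  rcases lt_trichotomy j k with h | h | h
  · obtain ⟨m, rfl⟩ : ∃ m, k = j + m + 1 := ⟨k - j - 1, by omega⟩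
    have e1 : j + m + 1 - j = m + 1 := by omega
    have e2 : j + m + 1 - (j + 1) = m := by omega
    have hf : divPow (j + m + 1) j = fun t => t ^ (m + 1) / (Nat.factorial (m + 1) : ℝ) := by
      funext t
      rw [divPow, if_pos (by omega), e1]
    have hv : divPow (j + m + 1) (j + 1) t
        = ((m + 1 : ℕ) : ℝ) * t ^ m / (Nat.factorial (m + 1) : ℝ) := by
      rw [divPow, if_pos (by omega), e2, Nat.factorial_succ]
      push_cast
      have : (m : ℝ) + 1 ≠ 0 := by positivity
      field_simp
    rw [hf, hv]
    have := (hasDerivAt_pow (m + 1) t).div_const (Nat.factorial (m + 1) : ℝ)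
    simpa using this
  · subst h
    have hf : divPow j j = fun _ => (1 : ℝ) := by
      funext t
      simp [divPow]
    have hv : divPow j (j + 1) t = 0 := by simp [divPow]
    rw [hf, hv]
    exact hasDerivAt_const t 1
  · have hf : divPow k j = fun _ => (0 : ℝ) := by
      funext t
      rw [divPow, if_neg (by omega)]
    have hv : divPow k (j + 1) t = 0 := by
      rw [divPow, if_neg (by omega)]
    rw [hf, hv]
    exact hasDerivAt_const t 0

/-- The derivative `∂^γ` of the Taylor polynomial `T_a^p F`, as an explicit formula. -/
noncomputable def Tder {n : ℕ} (F : (Fin n → ℕ) → EuclideanSpace ℝ (Fin n) → ℝ)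
    (a : EuclideanSpace ℝ (Fin n)) (p : ℕ) (γ : Fin n → ℕ) : EuclideanSpace ℝ (Fin n) → ℝ :=
  fun x => ∑ β ∈ midx n p, (∏ i, divPow (β i) (γ i) (x i - a i)) * F β a

lemma hasFDerivAt_prod_divPow {n : ℕ} (a : EuclideanSpace ℝ (Fin n)) (β γ : Fin n → ℕ)
    (x : EuclideanSpace ℝ (Fin n)) :
    HasFDerivAt (fun y : EuclideanSpace ℝ (Fin n) => ∏ i, divPow (β i) (γ i) (y i - a i))
      (∑ j, (∏ l ∈ Finset.univ.erase j, divPow (β l) (γ l) (x l - a l)) •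
        (divPow (β j) (γ j + 1) (x j - a j) • EuclideanSpace.proj (𝕜 := ℝ) j)) x := by
  refine HasFDerivAt.finsetProd fun j _ => ?_
  have h1 : HasFDerivAt (fun y : EuclideanSpace ℝ (Fin n) => y j - a j)
      (EuclideanSpace.proj (𝕜 := ℝ) j) x :=
    ((EuclideanSpace.proj (𝕜 := ℝ) (ι := Fin n) j).hasFDerivAt).sub_const (a j)
  exact (hasDerivAt_divPow (β j) (γ j) (x j - a j)).comp_hasFDerivAt x h1

lemma pderivE_Tder {n : ℕ} (F : (Fin n → ℕ) → EuclideanSpace ℝ (Fin n) → ℝ)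
    (a : EuclideanSpace ℝ (Fin n)) (p : ℕ) (γ : Fin n → ℕ) (i : Fin n) :
    pderivE i (Tder F a p γ) = Tder F a p (γ + Pi.single i 1) := by
  funext x
  have h : HasFDerivAt (Tder F a p γ) _ x :=
    HasFDerivAt.fun_sum fun β _ => (hasFDerivAt_prod_divPow a β γ x).mul_const (F β a)
  rw [pderivE, h.fderiv, Tder]
  simp only [_root_.sum_apply, _root_.smul_apply]
  refine Finset.sum_congr rfl fun β _ => ?_
  rw [smul_eq_mul, mul_comm (F β a)]
  congr 1
  rw [Finset.sum_eq_single i]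
  · rw [← Finset.mul_prod_erase Finset.univ
      (fun l => divPow (β l) ((γ + (Pi.single i 1 : Fin n → ℕ)) l) (x l - a l)) (Finset.mem_univ i)]
    have h1 : ∏ l ∈ Finset.univ.erase i,
          divPow (β l) ((γ + (Pi.single i 1 : Fin n → ℕ)) l) (x l - a l)
        = ∏ l ∈ Finset.univ.erase i, divPow (β l) (γ l) (x l - a l) :=
      Finset.prod_congr rfl fun l hl => by
        rw [Pi.add_apply, Pi.single_eq_of_ne (Finset.ne_of_mem_erase hl), add_zero]
    rw [h1]
    simp [mul_comm]
  · intro j _ hj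
    simp [hj]
  · simp

lemma pderivE_iterate_Tder {n : ℕ} (F : (Fin n → ℕ) → EuclideanSpace ℝ (Fin n) → ℝ)
    (a : EuclideanSpace ℝ (Fin n)) (p : ℕ) (i : Fin n) (k : ℕ) (γ : Fin n → ℕ) :
    (pderivE i)^[k] (Tder F a p γ) = Tder F a p (γ + Pi.single i k) := by
  induction k with
  | zero => simp
  | succ k ih =>
    rw [Function.iterate_succ_apply', ih, pderivE_Tder, add_assoc, ← Pi.single_add]

lemma foldr_pderivE_Tder {n : ℕ} (F : (Fin n → ℕ) → EuclideanSpace ℝ (Fin n) → ℝ)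
    (a : EuclideanSpace ℝ (Fin n)) (p : ℕ) (α : Fin n → ℕ) (l : List (Fin n)) :
    l.foldr (fun i g => (pderivE i)^[α i] g) (Tder F a p 0)
      = Tder F a p (l.map fun i => Pi.single i (α i)).sum := by
  induction l with
  | nil => simp
  | cons i l ih =>
    rw [List.foldr_cons, ih, pderivE_iterate_Tder, List.map_cons, List.sum_cons, add_comm]

lemma pderivMulti_Tpoly_eq_Tder {n : ℕ} (F : (Fin n → ℕ) → EuclideanSpace ℝ (Fin n) → ℝ)
    (a : EuclideanSpace ℝ (Fin n)) (p : ℕ) (α : Fin n → ℕ) :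
    pderivMulti α (Tpoly F a p) = Tder F a p α := by
  have h0 : Tpoly F a p = Tder F a p 0 := by
    funext x
    simp [Tpoly, Tder, divPow]
  rw [pderivMulti, h0, foldr_pderivE_Tder]
  congr 1
  rw [← List.ofFn_eq_map, List.sum_ofFn]
  exact Finset.univ_sum_single α

lemma mem_midx {n p : ℕ} {α : Fin n → ℕ} : α ∈ midx n p ↔ ∑ i, α i ≤ p := by
  simp only [midx, Finset.mem_filter, Fintype.mem_piFinset, Finset.mem_range,
    and_iff_right_iff_imp]
  intro h i
  have := Finset.single_le_sum (f := α) (fun _ _ => Nat.zero_le _) (Finset.mem_univ i)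
  omega

lemma prod_divPow_eq_zero {n : ℕ} {α β : Fin n → ℕ} (h : ¬ α ≤ β) (t : Fin n → ℝ) :
    ∏ i, divPow (β i) (α i) (t i) = 0 := by
  obtain ⟨i, hi⟩ := not_forall.1 h
  exact Finset.prod_eq_zero (Finset.mem_univ i) (if_neg hi)

/-- Derivatives of the Taylor polynomial of `F` are Taylor polynomials of the shifted jet. -/
lemma pderivMulti_Tpoly {n : ℕ} (F : (Fin n → ℕ) → EuclideanSpace ℝ (Fin n) → ℝ)
    (a : EuclideanSpace ℝ (Fin n)) (p : ℕ) (α : Fin n → ℕ) (hα : ∑ i, α i ≤ p) :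
    pderivMulti α (Tpoly F a p) = Tpoly (fun β => F (α + β)) a (p - ∑ i, α i) := by
  rw [pderivMulti_Tpoly_eq_Tder]
  funext x
  rw [Tder, Tpoly]
  symm
  refine Finset.sum_of_injOn (fun β => α + β) (fun β _ γ _ h => add_left_cancel h) ?_ ?_ ?_
  · intro β hβ
    have := mem_midx.1 (Finset.mem_coe.1 hβ)
    refine Finset.mem_coe.2 (mem_midx.2 ?_)
    simp only [Pi.add_apply, Finset.sum_add_distrib]
    omega
  · intro β hβ hβ'
    rw [prod_divPow_eq_zero, zero_mul]
    intro hle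
    refine hβ' ⟨β - α, Finset.mem_coe.2 (mem_midx.2 ?_), add_tsub_cancel_of_le hle⟩
    have h1 := mem_midx.1 hβ
    have h2 : ∑ i, (β - α) i + ∑ i, α i = ∑ i, β i := by
      rw [← Finset.sum_add_distrib]
      exact Finset.sum_congr rfl fun i _ => Nat.sub_add_cancel (hle i)
    omega
  · intro β _
    simp [divPow]

lemma pderivMulti_Tpoly_of_lt {n : ℕ} (F : (Fin n → ℕ) → EuclideanSpace ℝ (Fin n) → ℝ)
    (a : EuclideanSpace ℝ (Fin n)) (p : ℕ) (α : Fin n → ℕ) (hα : p < ∑ i, α i)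
    (x : EuclideanSpace ℝ (Fin n)) : pderivMulti α (Tpoly F a p) x = 0 := by
  rw [pderivMulti_Tpoly_eq_Tder]
  refine Finset.sum_eq_zero fun β hβ => ?_
  rw [prod_divPow_eq_zero, zero_mul]
  intro hle
  have h1 := mem_midx.1 hβ
  have h2 := Finset.sum_le_sum fun i (_ : i ∈ Finset.univ) => hle i
  omega

/-! ### Homogeneous parts of Taylor polynomials -/

/-- The homogeneous part of degree `j` of the Taylor polynomials of the jet `G` at `a`. -/
noncomputable def homPart {n : ℕ} (G : (Fin n → ℕ) → EuclideanSpace ℝ (Fin n) → ℝ)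
    (a x : EuclideanSpace ℝ (Fin n)) (j : ℕ) : ℝ :=
  ∑ β ∈ Finset.piAntidiag Finset.univ j,
    (∏ i, (x i - a i) ^ (β i) / (Nat.factorial (β i) : ℝ)) * G β a

lemma Tpoly_eq_sum_homPart {n : ℕ} (G : (Fin n → ℕ) → EuclideanSpace ℝ (Fin n) → ℝ)
    (a x : EuclideanSpace ℝ (Fin n)) (q : ℕ) :
    Tpoly G a q x = ∑ j ∈ Finset.range (q + 1), homPart G a x j := by
  rw [Tpoly, ← Finset.sum_fiberwise_of_maps_to (g := fun β : Fin n → ℕ => ∑ i, β i)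
    (t := Finset.range (q + 1))]
  · refine Finset.sum_congr rfl fun j hj => Finset.sum_congr ?_ fun _ _ => rfl
    ext β
    have := Finset.mem_range.1 hj
    simp only [Finset.mem_filter, mem_midx, Finset.mem_piAntidiag, Finset.mem_univ, implies_true,
      and_true]
    exact ⟨fun h => h.2, fun h => ⟨h.trans_le (by omega), h⟩⟩
  · intro β hβ
    have := mem_midx.1 hβ
    exact Finset.mem_range.2 (by omega)

lemma homPart_zero {n : ℕ} (G : (Fin n → ℕ) → EuclideanSpace ℝ (Fin n) → ℝ)
    (a x : EuclideanSpace ℝ (Fin n)) : homPart G a x 0 = G 0 a := by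
  simp [homPart]

/-- The multinomial theorem for `(1 + ⋯ + 1)^j`, in the form `∑_{|β| = j} 1/β! = n^j / j!`. -/
lemma sum_inv_factorial (n j : ℕ) :
    ∑ β ∈ Finset.piAntidiag (Finset.univ : Finset (Fin n)) j,
      ∏ i, (1 : ℝ) / (Nat.factorial (β i) : ℝ) = (n : ℝ) ^ j / (Nat.factorial j : ℝ) := by
  have h := Finset.sum_pow_eq_sum_piAntidiag (Finset.univ : Finset (Fin n)) (fun _ => (1 : ℝ)) j
  simp only [Finset.sum_const, Finset.card_univ, Fintype.card_fin, nsmul_eq_mul, mul_one, one_pow,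
    Finset.prod_const_one] at h
  rw [h, Finset.sum_div]
  refine Finset.sum_congr rfl fun β hβ => ?_
  have hj : ∑ i, β i = j := (Finset.mem_piAntidiag.1 hβ).1
  have hm := Nat.multinomial_spec (Finset.univ : Finset (Fin n)) β
  rw [hj] at hm
  rw [← hm]
  push_cast
  rw [Finset.prod_div_distrib, Finset.prod_const_one]
  have h1 : (∏ i, (Nat.factorial (β i) : ℝ)) ≠ 0 :=
    Finset.prod_ne_zero_iff.2 fun i _ => by positivity
  have h2 : (Nat.multinomial Finset.univ β : ℝ) ≠ 0 :=
    Nat.cast_ne_zero.2 (Nat.multinomial_pos _ _).ne'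
  field_simp

lemma abs_homPart_le {n : ℕ} (G : (Fin n → ℕ) → EuclideanSpace ℝ (Fin n) → ℝ)
    (a x : EuclideanSpace ℝ (Fin n)) (j : ℕ) (M : ℝ)
    (hM : ∀ β : Fin n → ℕ, ∑ i, β i = j → |G β a| ≤ M) :
    |homPart G a x j| ≤ (n * ‖x - a‖) ^ j / (Nat.factorial j : ℝ) * M := by
  have h : ∀ β ∈ Finset.piAntidiag (Finset.univ : Finset (Fin n)) j,
      |(∏ i, (x i - a i) ^ (β i) / (Nat.factorial (β i) : ℝ)) * G β a| ≤
        (∏ i, (1 : ℝ) / (Nat.factorial (β i) : ℝ)) * (‖x - a‖ ^ j * M) := by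
    intro β hβ
    have hj : ∑ i, β i = j := (Finset.mem_piAntidiag.1 hβ).1
    have h1 : |∏ i, (x i - a i) ^ (β i) / (Nat.factorial (β i) : ℝ)| ≤
        (∏ i, (1 : ℝ) / (Nat.factorial (β i) : ℝ)) * ‖x - a‖ ^ j := by
      rw [← hj, ← Finset.prod_pow_eq_pow_sum, ← Finset.prod_mul_distrib, Finset.abs_prod]
      refine Finset.prod_le_prod (fun _ _ => abs_nonneg _) fun i _ => ?_
      rw [abs_div, abs_pow, Nat.abs_cast, one_div_mul_eq_div]
      have : |x i - a i| ≤ ‖x - a‖ := by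
        simpa using PiLp.norm_apply_le (x - a) i
      gcongr
    rw [abs_mul, ← mul_assoc]
    exact mul_le_mul h1 (hM β hj) (abs_nonneg _) ((abs_nonneg _).trans h1)
  calc |homPart G a x j| ≤ _ := Finset.abs_sum_le_sum_abs _ _
    _ ≤ _ := Finset.sum_le_sum h
    _ = _ := by
      rw [← Finset.sum_mul, sum_inv_factorial, mul_pow]
      ring

/-! ### Weight sequences -/

lemma seq_pos {σ S s : ℕ → ℝ} (hσpos : ∀ k, 0 < σ k)
    (hS : ∀ k, S k = ∏ i ∈ Finset.range (k + 1), σ i)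
    (hs : ∀ k, s k = S k / (Nat.factorial k : ℝ)) (k : ℕ) : 0 < s k := by
  rw [hs, hS]
  exact div_pos (Finset.prod_pos fun i _ => hσpos i) (by positivity)

lemma seq_succ {σ S s : ℕ → ℝ}
    (hS : ∀ k, S k = ∏ i ∈ Finset.range (k + 1), σ i)
    (hs : ∀ k, s k = S k / (Nat.factorial k : ℝ)) (k : ℕ) :
    s (k + 1) = s k * (σ (k + 1) / ((k + 1 : ℕ) : ℝ)) := by
  rw [hs, hs, hS (k + 1), Finset.prod_range_succ, ← hS, Nat.factorial_succ]
  push_cast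
  have : (k : ℝ) + 1 ≠ 0 := by positivity
  field_simp

/-- Minimality of `Γ = Γ_s(t)` against `Γ - 1` bounds the ratio `s_Γ / s_{Γ-1} = σ_Γ / Γ`
by `1 / t`; the product form also covers `t = 0`, where `Γ = 1` because `0 ^ 0 = 1`. -/
lemma GammaFun_ratio_le {σ S s : ℕ → ℝ} (hσpos : ∀ k, 0 < σ k)
    (hS : ∀ k, S k = ∏ i ∈ Finset.range (k + 1), σ i)
    (hs : ∀ k, s k = S k / (Nat.factorial k : ℝ)) {t : ℝ} (ht : 0 ≤ t)
    (hΓ : 1 ≤ GammaFun s t) :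
    σ (GammaFun s t) / (GammaFun s t : ℝ) * t ≤ 1 := by
  have hmem : GammaFun s t ∈ {k : ℕ | s k * t ^ k = hFun s t} := Nat.sInf_mem (by
    by_contra hne
    rw [Set.not_nonempty_iff_eq_empty] at hne
    rw [GammaFun, hne] at hΓ
    simp at hΓ)
  obtain ⟨k, hk⟩ : ∃ k, GammaFun s t = k + 1 := ⟨GammaFun s t - 1, by omega⟩
  rw [hk] at hmem ⊢
  have hle : hFun s t ≤ s k * t ^ k := ciInf_le ⟨0, by
    rintro _ ⟨m, rfl⟩
    exact mul_nonneg (seq_pos hσpos hS hs m).le (pow_nonneg ht m)⟩ k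
  have hne : s k * t ^ k ≠ hFun s t := fun h => by
    have : GammaFun s t ≤ k := Nat.sInf_le h
    omega
  have hlt := lt_of_le_of_ne hle hne.symm
  rw [← (hmem : s (k + 1) * t ^ (k + 1) = hFun s t), seq_succ hS hs] at hlt
  have hpos : 0 ≤ s k * t ^ k := mul_nonneg (seq_pos hσpos hS hs k).le (pow_nonneg ht k)
  by_contra hcon
  have := mul_le_mul_of_nonneg_left (not_le.1 hcon).le hpos
  rw [pow_succ] at hlt
  linarith

/-- Up to index `2 Γ_{s'}(L d)` the ratios `s_k / s_{k-1} = σ_k / k` are at most `C₀ / (2 L d)`;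
the product form also covers `d = 0`. -/
lemma ratio_le_of_GammaFun {σ σ' S' s' : ℕ → ℝ} (hσ'pos : ∀ k, 0 < σ' k)
    (hS' : ∀ k, S' k = ∏ i ∈ Finset.range (k + 1), σ' i)
    (hs' : ∀ k, s' k = S' k / (Nat.factorial k : ℝ))
    (hσstar : ∀ j k : ℕ, 1 ≤ j → j ≤ k → σ j / j ≤ σ k / k)
    {C₀ : ℝ} (hC₀ : 0 < C₀) (hcomp : ∀ k : ℕ, σ (2 * k) ≤ C₀ * σ' k)
    {L d : ℝ} (hL : 0 < L) (hd : 0 ≤ d) (k : ℕ) (hk : 1 ≤ k)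
    (hkp : k ≤ 2 * GammaFun s' (L * d)) :
    σ k / (k : ℝ) * d ≤ C₀ / (2 * L) := by
  have h1 := hσstar k _ hk hkp
  have hΓ : 1 ≤ GammaFun s' (L * d) := by omega
  have h2 := GammaFun_ratio_le hσ'pos hS' hs' (mul_nonneg hL.le hd) hΓ
  set g := GammaFun s' (L * d)
  have hg : (0 : ℝ) < g := by exact_mod_cast hΓ
  calc σ k / (k : ℝ) * d ≤ σ (2 * g) / ((2 * g : ℕ) : ℝ) * d := by gcongr
    _ ≤ C₀ * σ' g / ((2 * g : ℕ) : ℝ) * d := by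
      gcongr
      exact hcomp g
    _ = C₀ / (2 * L) * (σ' g / (g : ℝ) * (L * d)) := by
      push_cast
      field_simp
    _ ≤ C₀ / (2 * L) * 1 := by gcongr
    _ = C₀ / (2 * L) := mul_one _

lemma seq_geom {σ S s : ℕ → ℝ} (hσpos : ∀ k, 0 < σ k)
    (hS : ∀ k, S k = ∏ i ∈ Finset.range (k + 1), σ i)
    (hs : ∀ k, s k = S k / (Nat.factorial k : ℝ)) {d κ : ℝ} (hd : 0 ≤ d) (hκ : 0 ≤ κ) {p : ℕ}
    (h : ∀ k : ℕ, 1 ≤ k → k ≤ p → σ k / (k : ℝ) * d ≤ κ) (m j : ℕ) (hmj : m + j ≤ p) :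
    s (m + j) * d ^ j ≤ s m * κ ^ j := by
  induction j with
  | zero => simp
  | succ j ih =>
    have h1 := ih (by omega)
    have h2 := h (m + j + 1) (by omega) (by omega)
    have h3 : 0 ≤ s m := (seq_pos hσpos hS hs m).le
    have h4 : 0 ≤ σ (m + j + 1) / ((m + j + 1 : ℕ) : ℝ) * d :=
      mul_nonneg (div_nonneg (hσpos _).le (Nat.cast_nonneg _)) hd
    calc s (m + (j + 1)) * d ^ (j + 1)
        = (s (m + j) * d ^ j) * (σ (m + j + 1) / ((m + j + 1 : ℕ) : ℝ) * d) := by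
          rw [← add_assoc, seq_succ hS hs]
          ring
      _ ≤ (s m * κ ^ j) * κ := mul_le_mul h1 h2 h4 (by positivity)
      _ = s m * κ ^ (j + 1) := by ring

lemma seq_div_factorial_le {σ S s : ℕ → ℝ} (hσpos : ∀ k, 0 < σ k)
    (hS : ∀ k, S k = ∏ i ∈ Finset.range (k + 1), σ i)
    (hs : ∀ k, s k = S k / (Nat.factorial k : ℝ)) (m j : ℕ) :
    S (m + j) / (Nat.factorial j : ℝ) ≤
      2 ^ (m + j) * (Nat.factorial m : ℝ) * s (m + j) := by
  have h1 : Nat.factorial (m + j) ≤ 2 ^ (m + j) * Nat.factorial m * Nat.factorial j := by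
    rw [← Nat.add_choose_mul_factorial_mul_factorial]
    gcongr
    exact Nat.choose_le_two_pow _ _
  have h2 : (Nat.factorial (m + j) : ℝ) ≤
      2 ^ (m + j) * (Nat.factorial m : ℝ) * (Nat.factorial j : ℝ) := by exact_mod_cast h1
  have h3 : S (m + j) = (Nat.factorial (m + j) : ℝ) * s (m + j) := by
    rw [hs]
    field_simp
  have h4 := (seq_pos hσpos hS hs (m + j)).le
  rw [div_le_iff₀ (by positivity), h3]
  calc _ ≤ (2 ^ (m + j) * (Nat.factorial m : ℝ) * (Nat.factorial j : ℝ)) * s (m + j) := by gcongr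
    _ = _ := by ring

lemma sum_half_pow_le (q : ℕ) : ∑ j ∈ Finset.range q, (1 / 2 : ℝ) ^ j ≤ 2 := by
  rw [geom_sum_eq (by norm_num)]
  have : (0 : ℝ) < (1 / 2) ^ q := by positivity
  rw [div_le_iff_of_neg (by norm_num)]
  linarith

/-! ### The two estimates -/

lemma degree_term_le {σ S s : ℕ → ℝ} (hσpos : ∀ k, 0 < σ k)
    (hS : ∀ k, S k = ∏ i ∈ Finset.range (k + 1), σ i)
    (hs : ∀ k, s k = S k / (Nat.factorial k : ℝ)) {C ρ d : ℝ} (hC : 0 ≤ C) (hρ : 0 ≤ ρ)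
    (hd : 0 ≤ d) (n m j : ℕ) :
    (n * d) ^ j / (Nat.factorial j : ℝ) * (C * ρ ^ (m + j) * S (m + j)) ≤
      C * (2 * ρ) ^ m * (Nat.factorial m : ℝ) * (2 * n * ρ) ^ j * (s (m + j) * d ^ j) := by
  have h := seq_div_factorial_le hσpos hS hs m j
  calc _ = (n * d) ^ j * (C * ρ ^ (m + j)) * (S (m + j) / (Nat.factorial j : ℝ)) := by ring
    _ ≤ (n * d) ^ j * (C * ρ ^ (m + j)) *
        (2 ^ (m + j) * (Nat.factorial m : ℝ) * s (m + j)) := by gcongr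
    _ = _ := by ring

/-- Dominates a sum of homogeneous parts of degrees `i, i + 1, …` by a geometric series;
`i` is the degree at which the sum starts. -/
lemma sum_homPart_le {n : ℕ} {σ S s : ℕ → ℝ} (hσpos : ∀ k, 0 < σ k)
    (hS : ∀ k, S k = ∏ i ∈ Finset.range (k + 1), σ i)
    (hs : ∀ k, s k = S k / (Nat.factorial k : ℝ)) {C ρ κ : ℝ} (hC : 0 ≤ C) (hρ : 0 ≤ ρ)
    (hκ : 0 ≤ κ) (hκρ : 2 * n * ρ * κ ≤ 1 / 2) {p : ℕ}
    (a x : EuclideanSpace ℝ (Fin n))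
    (h : ∀ k : ℕ, 1 ≤ k → k ≤ p → σ k / (k : ℝ) * ‖x - a‖ ≤ κ)
    (F : (Fin n → ℕ) → EuclideanSpace ℝ (Fin n) → ℝ)
    (hF : ∀ α : Fin n → ℕ, |F α a| ≤ C * ρ ^ (∑ i, α i) * S (∑ i, α i))
    (α : Fin n → ℕ) (i q : ℕ) (hq : ∑ l, α l + i + q ≤ p + 1) :
    |∑ j ∈ Finset.range q, homPart (fun β => F (α + β)) a x (j + i)| ≤
      C * (2 * ρ) ^ (∑ l, α l) * (Nat.factorial (∑ l, α l) : ℝ) * (2 * n * ρ) ^ i *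
        (s (∑ l, α l + i) * ‖x - a‖ ^ i) * 2 := by
  set m := ∑ l, α l with hm
  set d := ‖x - a‖ with hd_def
  have hd : 0 ≤ d := norm_nonneg _
  have hsm := (seq_pos hσpos hS hs (m + i)).le
  have key : ∀ j ∈ Finset.range q, |homPart (fun β => F (α + β)) a x (j + i)| ≤
      C * (2 * ρ) ^ m * (Nat.factorial m : ℝ) * (2 * n * ρ) ^ i * (s (m + i) * d ^ i) *
        (1 / 2) ^ j := by
    intro j hj
    have hjq := Finset.mem_range.1 hj
    have h1 := abs_homPart_le (fun β => F (α + β)) a x (j + i)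
      (C * ρ ^ (m + (j + i)) * S (m + (j + i))) fun β hβ => by
        have := hF (α + β)
        simpa only [Pi.add_apply, Finset.sum_add_distrib, hβ, ← hm] using this
    have h2 := degree_term_le hσpos hS hs hC hρ hd n m (j + i)
    have h3 := seq_geom hσpos hS hs hd hκ h (m + i) j (by omega)
    have h4 : (2 * n * ρ * κ) ^ j ≤ (1 / 2) ^ j := by gcongr
    calc _ ≤ _ := h1
      _ ≤ _ := h2
      _ = C * (2 * ρ) ^ m * (Nat.factorial m : ℝ) * (2 * n * ρ) ^ (j + i) * d ^ i *
          (s (m + i + j) * d ^ j) := by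
        rw [add_comm j i, ← add_assoc]
        ring
      _ ≤ C * (2 * ρ) ^ m * (Nat.factorial m : ℝ) * (2 * n * ρ) ^ (j + i) * d ^ i *
          (s (m + i) * κ ^ j) := by gcongr
      _ = C * (2 * ρ) ^ m * (Nat.factorial m : ℝ) * (2 * n * ρ) ^ i * (s (m + i) * d ^ i) *
          (2 * n * ρ * κ) ^ j := by ring
      _ ≤ _ := by gcongr
  calc _ ≤ _ := Finset.abs_sum_le_sum_abs _ _
    _ ≤ _ := Finset.sum_le_sum key
    _ = C * (2 * ρ) ^ m * (Nat.factorial m : ℝ) * (2 * n * ρ) ^ i * (s (m + i) * d ^ i) *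
        ∑ j ∈ Finset.range q, (1 / 2 : ℝ) ^ j := by rw [Finset.mul_sum]
    _ ≤ _ := by
      gcongr
      exact sum_half_pow_le q

/-- Lemma 5.2: bounds for Taylor polynomials of Whitney jets at nearest points. -/
theorem stmt_13 (n : ℕ) (σ σ' S S' s s' : ℕ → ℝ)
    (hσpos : ∀ k, 0 < σ k) (hσmono : Monotone σ) (hσ0 : σ 0 = 1)
    (hS : ∀ k, S k = ∏ i ∈ Finset.range (k + 1), σ i)
    (hSws : Tendsto (fun k : ℕ => (S k) ^ (1 / (k : ℝ))) atTop atTop)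
    (hσ'pos : ∀ k, 0 < σ' k) (hσ'mono : Monotone σ') (hσ'0 : σ' 0 = 1)
    (hS' : ∀ k, S' k = ∏ i ∈ Finset.range (k + 1), σ' i)
    (hS'ws : Tendsto (fun k : ℕ => (S' k) ^ (1 / (k : ℝ))) atTop atTop)
    (hσstar : ∀ j k : ℕ, 1 ≤ j → j ≤ k → σ j / j ≤ σ k / k)
    (hσ'star : ∀ j k : ℕ, 1 ≤ j → j ≤ k → σ' j / j ≤ σ' k / k)
    (hcomp : ∃ C > 0, ∀ k : ℕ, σ (2 * k) ≤ C * σ' k)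
    (hs : ∀ k, s k = S k / (Nat.factorial k : ℝ))
    (hs' : ∀ k, s' k = S' k / (Nat.factorial k : ℝ)) :
    ∃ D₁ : ℝ, 1 < D₁ ∧
      ∀ E : Set (EuclideanSpace ℝ (Fin n)), IsCompact E →
      ∀ F : (Fin n → ℕ) → EuclideanSpace ℝ (Fin n) → ℝ, (∀ α, ContinuousOn (F α) E) →
      ∀ C ρ : ℝ, 0 < C → 1 ≤ ρ →
      (∀ α : Fin n → ℕ, ∀ a ∈ E, |F α a| ≤ C * ρ ^ (∑ i, α i) * S (∑ i, α i)) →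
      (∀ p : ℕ, ∀ α : Fin n → ℕ, ∑ i, α i ≤ p → ∀ a ∈ E, ∀ b ∈ E,
        |Rrem F a p α b| ≤ C * ρ ^ (p + 1) * (Nat.factorial (∑ i, α i) : ℝ) * s (p + 1) *
          ‖b - a‖ ^ (p + 1 - ∑ i, α i)) →
      ∀ L : ℝ, D₁ * ρ ≤ L →
      ∀ x : EuclideanSpace ℝ (Fin n), ∀ xh ∈ E, ‖x - xh‖ = Metric.infDist x E →
      ∀ α : Fin n → ℕ,
        (|pderivMulti α (Tpoly F xh (2 * GammaFun s' (L * Metric.infDist x E))) x| ≤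
          C * (2 * L) ^ ((∑ i, α i) + 1) * S (∑ i, α i)) ∧
        ((∑ i, α i) < 2 * GammaFun s' (L * Metric.infDist x E) →
          |pderivMulti α (Tpoly F xh (2 * GammaFun s' (L * Metric.infDist x E))) x -
              F α xh| ≤
            C * (2 * L) ^ ((∑ i, α i) + 1) * (Nat.factorial (∑ i, α i) : ℝ) *
              s ((∑ i, α i) + 1) * Metric.infDist x E) := by
  obtain ⟨C₀, hC₀, hcomp⟩ := hcomp
  -- The summand `2 n C₀` makes the geometric ratio at most `1/2`, the summand `2 n` absorbs the
  -- factor `2 n ρ` in the second estimate, and `2` gives `1 < D₁` and `ρ ≤ L`.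
  refine ⟨2 + 2 * n + 2 * n * C₀, ?_, ?_⟩
  · have : (0 : ℝ) ≤ 2 * n + 2 * n * C₀ := by positivity
    linarith
  intro E _ F _ C ρ hC hρ hF _ L hL x xh hxh hx α
  have hn : (0 : ℝ) ≤ n := Nat.cast_nonneg n
  have hρ0 : 0 ≤ ρ := by linarith
  have hnρ : 0 ≤ n * ρ := by positivity
  have hnCρ : 0 ≤ n * C₀ * ρ := by positivity
  have hρL : ρ ≤ L := by nlinarith
  have hL0 : 0 < L := by linarith
  have hnL : 2 * n * ρ ≤ L := by nlinarith
  have hnCL : 2 * n * C₀ * ρ ≤ L := by nlinarith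
  have hκρ : 2 * n * ρ * (C₀ / (2 * L)) ≤ 1 / 2 := by
    rw [mul_div_assoc', div_le_div_iff₀ (by positivity) (by norm_num)]
    nlinarith
  have hd : 0 ≤ Metric.infDist x E := Metric.infDist_nonneg
  have hratio := ratio_le_of_GammaFun hσ'pos hS' hs' hσstar hC₀ hcomp hL0 hd
  set p := 2 * GammaFun s' (L * Metric.infDist x E)
  rw [← hx] at hd hratio ⊢
  set m := ∑ i, α i with hm
  have hbound := sum_homPart_le hσpos hS hs hC.le hρ0 (by positivity) hκρ xh x hratio F
    (fun β => hF β xh hxh) α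
  rw [← hm] at hbound
  have hSm : S m = (Nat.factorial m : ℝ) * s m := by
    rw [hs]
    field_simp
  constructor
  · rcases le_or_gt m p with hmp | hmp
    · rw [pderivMulti_Tpoly F xh p α hmp, Tpoly_eq_sum_homPart]
      have h := hbound 0 (p - m + 1) (by omega)
      have hsm := (seq_pos hσpos hS hs m).le
      simp only [add_zero, pow_zero, mul_one] at h
      calc _ ≤ _ := h
        _ = C * ((2 * ρ) ^ m * 2) * S m := by
          rw [hSm]
          ring
        _ ≤ C * ((2 * L) ^ m * (2 * L)) * S m := by
          rw [hSm]
          gcongr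
          linarith
        _ = _ := by ring
    · rw [pderivMulti_Tpoly_of_lt F xh p α hmp, abs_zero, hSm]
      have hsm := (seq_pos hσpos hS hs m).le
      positivity
  · intro hmp
    have hsm := (seq_pos hσpos hS hs (m + 1)).le
    rw [pderivMulti_Tpoly F xh p α hmp.le, Tpoly_eq_sum_homPart, Finset.sum_range_succ',
      homPart_zero, add_zero, add_sub_cancel_right]
    have h := hbound 1 (p - m) (by omega)
    simp only [pow_one] at h
    calc _ ≤ _ := h
      _ = C * ((2 * ρ) ^ m * (2 * (2 * n * ρ))) * (Nat.factorial m : ℝ) * s (m + 1) *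
          ‖x - xh‖ := by ring
      _ ≤ C * ((2 * L) ^ m * (2 * L)) * (Nat.factorial m : ℝ) * s (m + 1) *
          ‖x - xh‖ := by gcongr
      _ = _ := by ring
end
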